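/- Fix d ≥ 1 and δ > 0. Let K denote the space of nonempty compact subsets of the closed unit ball of ℝ^d, equipped with the Hausdorff metric and its Borel σ-algebra. Then the map N_δ : K → ℕ ∪ {∞} which sends a compact set S to the number of connected components of S whose diameter is at least δ, is Borel measurable. -/

import Mathlib

open MeasureTheory TopologicalSpace

/-!
Write `N` for the number of components of diameter at least `δ`. The set `{N ≥ 1}` is closed:
it consists of the compacta that contain a connected compactum of diameter at least `δ`. If
`N S ≥ 2`, two large components of `S` are separated by a splitting of `S` into disjoint compacta
`A` and `B` with `N A ≥ 1` and `N B ≥ 1`. Since `N` is additive over disjoint unions, this makes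
`{N ≥ n + 2}` the union over `i + j = n` of the sets of all disjoint unions `A ⊔ B` with
`N A ≥ i + 1` and `N B ≥ j + 1`. As `⊔` is a proper map, it sends Fσ sets to Fσ sets, and
disjointness is an open, hence Fσ, condition; by strong induction, `{N ≥ n}` is Fσ for every `n`.
Being Fσ is expressed as having a Gδ complement.
-/

section Topology

variable {X : Type*} [TopologicalSpace X]

theorem connectedComponentIn_union_left {A B : Set X} (hA : IsClosed A) (hB : IsClosed B)
    (hAB : Disjoint A B) {x : X} (hx : x ∈ A) :
    connectedComponentIn (A ∪ B) x = connectedComponentIn A x := by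
  have hx_mem : x ∈ connectedComponentIn (A ∪ B) x := mem_connectedComponentIn (Or.inl hx)
  have h_sub : connectedComponentIn (A ∪ B) x ⊆ A := by
    refine (isPreconnected_iff_subset_of_disjoint_closed.1 isPreconnected_connectedComponentIn
      A B hA hB (connectedComponentIn_subset _ _) ?_).resolve_right
      fun h => hAB.notMem_of_mem_left hx (h hx_mem)
    rw [hAB.inter_eq, Set.inter_empty]
  exact (isPreconnected_connectedComponentIn.subset_connectedComponentIn hx_mem h_sub).antisymm
    (connectedComponentIn_mono x Set.subset_union_left)

theorem isCompact_connectedComponentIn {S : Set X} (hS : IsCompact S) (x : X) :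
    IsCompact (connectedComponentIn S x) := by
  have : CompactSpace S := isCompact_iff_compactSpace.1 hS
  by_cases hx : x ∈ S
  · rw [connectedComponentIn_eq_image hx]
    exact isClosed_connectedComponent.isCompact.image continuous_subtype_val
  · rw [connectedComponentIn_eq_empty hx]
    exact isCompact_empty

theorem exists_disjoint_sup_eq_of_connectedComponentIn_ne [T2Space X] {S : NonemptyCompacts X}
    {x y : X} (hx : x ∈ S) (hy : y ∈ S)
    (hxy : connectedComponentIn (S : Set X) x ≠ connectedComponentIn (S : Set X) y) :
    ∃ A B : NonemptyCompacts X, Disjoint (A : Set X) B ∧ A ⊔ B = S ∧ x ∈ A ∧ y ∈ B := by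
  have : CompactSpace (S : Set X) := isCompact_iff_compactSpace.1 S.isCompact
  have h_mk_ne :
      ConnectedComponents.mk (⟨x, hx⟩ : (S : Set X)) ≠ ConnectedComponents.mk ⟨y, hy⟩ := by
    rw [connectedComponentIn_eq_image hx, connectedComponentIn_eq_image hy] at hxy
    exact fun h => hxy (congrArg _ (ConnectedComponents.coe_eq_coe.1 h))
  obtain ⟨U, hU, hxU, hyU⟩ := exists_isClopen_of_totally_separated h_mk_ne
  let Z : Set (S : Set X) := ConnectedComponents.mk ⁻¹' U
  have hZ : IsClopen Z := hU.preimage ConnectedComponents.continuous_coe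
  refine ⟨⟨⟨_, hZ.isClosed.isCompact.image continuous_subtype_val⟩, x, ⟨x, hx⟩, hxU, rfl⟩,
    ⟨⟨_, hZ.compl.isClosed.isCompact.image continuous_subtype_val⟩, y, ⟨y, hy⟩, hyU, rfl⟩,
    Set.disjoint_image_of_injective Subtype.val_injective disjoint_compl_right,
    SetLike.coe_injective ?_, ⟨⟨x, hx⟩, hxU, rfl⟩, ⟨⟨y, hy⟩, hyU, rfl⟩⟩
  calc (Subtype.val '' Z ∪ Subtype.val '' Zᶜ : Set X) = Subtype.val '' (Z ∪ Zᶜ) :=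
        (Set.image_union _ _ _).symm
    _ = S := by rw [Set.union_compl_self, Set.image_univ, Subtype.range_coe]

theorem not_isPreconnected_iff_exists_isOpen [T2Space X] {C : Set X} (hC : IsCompact C) :
    ¬ IsPreconnected C ↔ ∃ U V : Set X, IsOpen U ∧ IsOpen V ∧ Disjoint U V ∧ C ⊆ U ∪ V ∧
      (C ∩ U).Nonempty ∧ (C ∩ V).Nonempty := by
  constructor
  · intro h
    rw [isPreconnected_closed_iff] at h
    push Not at h
    obtain ⟨F, G, hF, hG, hCFG, hCF, hCG, h_empty⟩ := h
    have h_disj : Disjoint (C ∩ F) (C ∩ G) := by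
      rw [Set.disjoint_iff_inter_eq_empty, ← Set.inter_inter_distrib_left, h_empty]
    obtain ⟨U, V, hU, hV, hFU, hGV, hUV⟩ :=
      SeparatedNhds.of_isCompact_isCompact (hC.inter_right hF) (hC.inter_right hG) h_disj
    refine ⟨U, V, hU, hV, hUV, fun x hx => ?_,
      hCF.mono (Set.subset_inter Set.inter_subset_left hFU),
      hCG.mono (Set.subset_inter Set.inter_subset_left hGV)⟩
    exact (hCFG hx).imp (fun h => hFU ⟨hx, h⟩) fun h => hGV ⟨hx, h⟩
  · rintro ⟨U, V, hU, hV, hUV, hCUV, hCU, hCV⟩ h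
    obtain ⟨x, -, hxU, hxV⟩ := h U V hU hV hCUV hCU hCV
    exact hUV.notMem_of_mem_left hxU hxV

theorem isClosed_setOfPred_isPreconnected [T2Space X] :
    IsClosed {C : NonemptyCompacts X | IsPreconnected (C : Set X)} := by
  rw [← isOpen_compl_iff, isOpen_iff_forall_mem_open]
  intro C hC
  obtain ⟨U, V, hU, hV, hUV, hCUV, hCU, hCV⟩ :=
    (not_isPreconnected_iff_exists_isOpen C.isCompact).1 hC
  exact ⟨{K | (K : Set X) ⊆ U ∪ V} ∩ ({K | ((K : Set X) ∩ U).Nonempty} ∩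
      {K | ((K : Set X) ∩ V).Nonempty}),
    fun K ⟨hKUV, hKU, hKV⟩ => (not_isPreconnected_iff_exists_isOpen K.isCompact).2
      ⟨U, V, hU, hV, hUV, hKUV, hKU, hKV⟩,
    (NonemptyCompacts.isOpen_subsets_of_isOpen (hU.union hV)).inter
      ((NonemptyCompacts.isOpen_inter_nonempty_of_isOpen hU).inter
        (NonemptyCompacts.isOpen_inter_nonempty_of_isOpen hV)),
    hCUV, hCU, hCV⟩

theorem isGδ_compl_image {Y : Type*} [TopologicalSpace Y] {f : X → Y} (hf : IsClosedMap f)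
    {s : Set X} (hs : IsGδ sᶜ) : IsGδ (f '' s)ᶜ := by
  obtain ⟨U, hU, hsU⟩ := isGδ_iff_eq_iInter_nat.1 hs
  have h_image : (f '' s)ᶜ = ⋂ n, (f '' (U n)ᶜ)ᶜ := by
    rw [← Set.compl_iUnion, ← Set.image_iUnion, ← Set.compl_iInter, ← hsU, compl_compl]
  rw [h_image]
  exact .iInter_of_isOpen fun n => (hf _ (hU n).isClosed_compl).isOpen_compl

end Topology

section Sup

variable {X : Type*} [TopologicalSpace X] [T2Space X] [CompactlyCoherentSpace (NonemptyCompacts X)]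

theorem isProperMap_nonemptyCompacts_sup :
    IsProperMap fun p : NonemptyCompacts X × NonemptyCompacts X => p.1 ⊔ p.2 := by
  -- If `A ⊔ B` ranges over a compact family, then `A` and `B` range over subsets of the union of
  -- that family, which is compact.
  refine isProperMap_iff_isCompact_preimage.2 ⟨continuous_sup, fun 𝒦 h𝒦 => ?_⟩
  let L : Set X := ⋃ K ∈ NonemptyCompacts.toCompacts '' 𝒦, (K : Set X)
  have hL : IsCompact L := Compacts.isCompact_biUnion_coe_of_isCompact
    (h𝒦.image NonemptyCompacts.continuous_toCompacts)
  have h_subsets : IsCompact {A : NonemptyCompacts X | (A : Set X) ⊆ L} :=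
    NonemptyCompacts.isClosedEmbedding_toCompacts.isCompact_preimage
      (Compacts.isCompact_subsets_of_isCompact hL)
  refine (h_subsets.prod h_subsets).of_isClosed_subset
    (h𝒦.isClosed.preimage continuous_sup) fun ⟨A, B⟩ hAB => ?_
  have h_sup : ((A ⊔ B : NonemptyCompacts X) : Set X) ⊆ L :=
    Set.subset_biUnion_of_mem (u := fun K : Compacts X => (K : Set X))
      (Set.mem_image_of_mem NonemptyCompacts.toCompacts hAB)
  exact Set.union_subset_iff.1 h_sup

theorem isClosed_upperClosure_nonemptyCompacts {𝒞 : Set (NonemptyCompacts X)} (h𝒞 : IsClosed 𝒞) :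
    IsClosed (upperClosure 𝒞 : Set (NonemptyCompacts X)) := by
  have h_image : (upperClosure 𝒞 : Set (NonemptyCompacts X)) =
      (fun p : NonemptyCompacts X × NonemptyCompacts X => p.1 ⊔ p.2) '' (𝒞 ×ˢ Set.univ) := by
    ext S
    constructor
    · rintro ⟨C, hC, hCS⟩
      exact ⟨(C, S), ⟨hC, trivial⟩, sup_eq_right.2 hCS⟩
    · rintro ⟨⟨C, B⟩, ⟨hC, -⟩, rfl⟩
      exact ⟨C, hC, le_sup_left⟩
  rw [h_image]
  exact isProperMap_nonemptyCompacts_sup.isClosedMap _ (h𝒞.prod isClosed_univ)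

end Sup

section Diameter

variable {X : Type*} [PseudoMetricSpace X]

theorem le_diam_iff_exists_le_dist {C : Set X} (hC : IsCompact C) (hne : C.Nonempty) {δ : ℝ} :
    δ ≤ Metric.diam C ↔ ∃ x ∈ C, ∃ y ∈ C, δ ≤ dist x y := by
  constructor
  · intro h
    obtain ⟨⟨x, y⟩, ⟨hx, hy⟩, hxy⟩ :=
      (hC.prod hC).exists_isMaxOn (hne.prod hne) continuous_dist.continuousOn
    exact ⟨x, hx, y, hy, h.trans <| Metric.diam_le_of_forall_dist_le dist_nonneg
      fun a ha b hb => hxy (Set.mk_mem_prod ha hb)⟩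
  · rintro ⟨x, hx, y, hy, hxy⟩
    exact hxy.trans (Metric.dist_le_diam_of_mem hC.isBounded hx hy)

theorem isClosed_setOfPred_le_diam (δ : ℝ) :
    IsClosed {C : NonemptyCompacts X | δ ≤ Metric.diam (C : Set X)} := by
  have h_dist : IsClosed {p : X × X | δ ≤ dist p.1 p.2} :=
    isClosed_le continuous_const continuous_dist
  have h_eq : {C : NonemptyCompacts X | δ ≤ Metric.diam (C : Set X)} =
      (fun C => C ×ˢ C) ⁻¹' {K : NonemptyCompacts (X × X) |
        ((K : Set (X × X)) ∩ {p | δ ≤ dist p.1 p.2}).Nonempty} := by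
    ext C
    simp only [Set.mem_ofPred_eq, Set.mem_preimage, NonemptyCompacts.coe_prod,
      le_diam_iff_exists_le_dist C.isCompact C.nonempty, Set.Nonempty, Set.mem_inter_iff,
      Set.mem_prod, Prod.exists]
    grind
  rw [h_eq]
  exact (NonemptyCompacts.isClosed_inter_nonempty_of_isClosed h_dist).preimage
    (NonemptyCompacts.continuous_prod.comp (continuous_id.prodMk continuous_id))

/-- The connected components of `S` of diameter at least `δ`. The components are taken in the
subspace `S` but recorded as subsets of the ambient space; `N_δ(S)` is the `Set.encard` of this
set. -/
def largeComponents (δ : ℝ) (S : Set X) : Set (Set X) :=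
  {C | (∃ x ∈ S, C = connectedComponentIn S x) ∧ δ ≤ Metric.diam C}

theorem largeComponents_union {δ : ℝ} {A B : Set X} (hA : IsClosed A) (hB : IsClosed B)
    (hAB : Disjoint A B) :
    largeComponents δ (A ∪ B) = largeComponents δ A ∪ largeComponents δ B := by
  have h_left : ∀ x ∈ A, connectedComponentIn (A ∪ B) x = connectedComponentIn A x :=
    fun x => connectedComponentIn_union_left hA hB hAB
  have h_right : ∀ x ∈ B, connectedComponentIn (A ∪ B) x = connectedComponentIn B x :=
    fun x hx => Set.union_comm A B ▸ connectedComponentIn_union_left hB hA hAB.symm hx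
  ext C
  simp only [largeComponents, Set.mem_union, Set.mem_ofPred_eq]
  grind

theorem disjoint_largeComponents {δ : ℝ} {A B : Set X} (hAB : Disjoint A B) :
    Disjoint (largeComponents δ A) (largeComponents δ B) := by
  rw [Set.disjoint_left]
  rintro _ ⟨⟨x, hx, rfl⟩, -⟩ ⟨⟨y, -, hxy⟩, -⟩
  have hxB : x ∈ connectedComponentIn B y := hxy ▸ mem_connectedComponentIn hx
  exact hAB.notMem_of_mem_left hx (connectedComponentIn_subset B y hxB)

theorem encard_largeComponents_union {δ : ℝ} {A B : Set X} (hA : IsClosed A) (hB : IsClosed B)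
    (hAB : Disjoint A B) :
    (largeComponents δ (A ∪ B)).encard =
      (largeComponents δ A).encard + (largeComponents δ B).encard := by
  rw [largeComponents_union hA hB hAB, Set.encard_union_eq (disjoint_largeComponents hAB)]

theorem largeComponents_nonempty_iff {δ : ℝ} {S : NonemptyCompacts X} :
    (largeComponents δ (S : Set X)).Nonempty ↔
      S ∈ upperClosure {C : NonemptyCompacts X |
        IsPreconnected (C : Set X) ∧ δ ≤ Metric.diam (C : Set X)} := by
  constructor
  · rintro ⟨_, ⟨x, hx, rfl⟩, hδ⟩
    exact ⟨⟨⟨_, isCompact_connectedComponentIn S.isCompact x⟩, x, mem_connectedComponentIn hx⟩,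
      ⟨isPreconnected_connectedComponentIn, hδ⟩, connectedComponentIn_subset _ x⟩
  · rintro ⟨C, ⟨hC, hδ⟩, hCS⟩
    obtain ⟨x, hx⟩ := C.nonempty
    exact ⟨connectedComponentIn S x, ⟨x, hCS hx, rfl⟩, hδ.trans <| Metric.diam_mono
      (hC.subset_connectedComponentIn hx hCS)
        (isCompact_connectedComponentIn S.isCompact x).isBounded⟩

end Diameter

theorem exists_add_eq_of_add_two_le_add {a b : ℕ∞} {n : ℕ} (ha : 1 ≤ a) (hb : 1 ≤ b)
    (hab : (n + 2 : ℕ) ≤ a + b) :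
    ∃ i j : ℕ, i + j = n ∧ (i + 1 : ℕ) ≤ a ∧ (j + 1 : ℕ) ≤ b := by
  obtain hna | han := le_or_gt ((n + 1 : ℕ) : ℕ∞) a
  · exact ⟨n, 0, rfl, hna, by simpa using hb⟩
  lift a to ℕ using han.ne_top
  refine ⟨a - 1, n + 1 - a, ?_, ?_, ?_⟩
  · norm_cast at ha han
    omega
  · norm_cast at ha ⊢
    omega
  · induction b with
    | top => exact le_top
    | coe b =>
      norm_cast at *
      omega

section Measurability

variable {X : Type*} [MetricSpace X]

theorem isGδ_compl_setOfPred_disjoint_sup_eq {𝒜 ℬ : Set (NonemptyCompacts X)}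
    (h𝒜 : IsGδ 𝒜ᶜ) (hℬ : IsGδ ℬᶜ) :
    IsGδ {S : NonemptyCompacts X |
      ∃ A ∈ 𝒜, ∃ B ∈ ℬ, Disjoint (A : Set X) B ∧ A ⊔ B = S}ᶜ := by
  let 𝒟 : Set (NonemptyCompacts X × NonemptyCompacts X) := {p | Disjoint (p.1 : Set X) p.2}
  have h𝒟 : IsGδ 𝒟ᶜ := NonemptyCompacts.isOpen_setOfPred_disjoint_coe.isClosed_compl.isGδ
  have h_compl : IsGδ ((𝒜 ×ˢ ℬ) ∩ 𝒟)ᶜ := by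
    rw [Set.compl_inter, Set.compl_prod_eq_union, Set.prod_univ, Set.univ_prod]
    exact ((h𝒜.preimage continuous_fst).union (hℬ.preimage continuous_snd)).union h𝒟
  convert isGδ_compl_image isProperMap_nonemptyCompacts_sup.isClosedMap h_compl using 2
  ext S
  constructor
  · rintro ⟨A, hA, B, hB, hAB, rfl⟩
    exact ⟨(A, B), ⟨⟨hA, hB⟩, hAB⟩, rfl⟩
  · rintro ⟨⟨A, B⟩, ⟨⟨hA, hB⟩, hAB⟩, rfl⟩
    exact ⟨A, hA, B, hB, hAB, rfl⟩

theorem isClosed_setOfPred_largeComponents_nonempty (δ : ℝ) :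
    IsClosed {S : NonemptyCompacts X | (largeComponents δ (S : Set X)).Nonempty} := by
  simp only [largeComponents_nonempty_iff]
  exact isClosed_upperClosure_nonemptyCompacts
    (isClosed_setOfPred_isPreconnected.inter (isClosed_setOfPred_le_diam δ))

theorem exists_disjoint_sup_eq_of_one_lt_encard_largeComponents {δ : ℝ} {S : NonemptyCompacts X}
    (hS : 1 < (largeComponents δ (S : Set X)).encard) :
    ∃ A B : NonemptyCompacts X, Disjoint (A : Set X) B ∧ A ⊔ B = S ∧
      (largeComponents δ (A : Set X)).Nonempty ∧ (largeComponents δ (B : Set X)).Nonempty := by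
  obtain ⟨_, _, ⟨⟨x, hx, rfl⟩, hδx⟩, ⟨⟨y, hy, rfl⟩, hδy⟩, hxy⟩ := Set.one_lt_encard_iff.1 hS
  obtain ⟨A, B, hAB, rfl, hxA, hyB⟩ := exists_disjoint_sup_eq_of_connectedComponentIn_ne hx hy hxy
  have hA : IsClosed (A : Set X) := A.isCompact.isClosed
  have hB : IsClosed (B : Set X) := B.isCompact.isClosed
  rw [NonemptyCompacts.coe_sup] at hδx hδy
  rw [connectedComponentIn_union_left hA hB hAB hxA] at hδx
  rw [Set.union_comm, connectedComponentIn_union_left hB hA hAB.symm hyB] at hδy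
  exact ⟨A, B, hAB, rfl, ⟨_, ⟨x, hxA, rfl⟩, hδx⟩, ⟨_, ⟨y, hyB, rfl⟩, hδy⟩⟩

theorem add_two_le_encard_largeComponents_iff {δ : ℝ} {S : NonemptyCompacts X} {n : ℕ} :
    (n + 2 : ℕ) ≤ (largeComponents δ (S : Set X)).encard ↔
      ∃ i j : ℕ, i + j = n ∧
        ∃ A : NonemptyCompacts X, (i + 1 : ℕ) ≤ (largeComponents δ (A : Set X)).encard ∧
        ∃ B : NonemptyCompacts X, (j + 1 : ℕ) ≤ (largeComponents δ (B : Set X)).encard ∧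
          Disjoint (A : Set X) B ∧ A ⊔ B = S := by
  have h_add (A B : NonemptyCompacts X) (hAB : Disjoint (A : Set X) B) :
      (largeComponents δ ((A ⊔ B : NonemptyCompacts X) : Set X)).encard =
        (largeComponents δ (A : Set X)).encard + (largeComponents δ (B : Set X)).encard :=
    encard_largeComponents_union A.isCompact.isClosed B.isCompact.isClosed hAB
  constructor
  · intro h
    have h_one_lt : 1 < (largeComponents δ (S : Set X)).encard :=
      lt_of_lt_of_le (by norm_cast; omega) h
    obtain ⟨A, B, hAB, rfl, hA, hB⟩ :=
      exists_disjoint_sup_eq_of_one_lt_encard_largeComponents h_one_lt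
    obtain ⟨i, j, hij, hiA, hjB⟩ := exists_add_eq_of_add_two_le_add
      (Set.one_le_encard_iff_nonempty.2 hA) (Set.one_le_encard_iff_nonempty.2 hB)
      (h_add A B hAB ▸ h)
    exact ⟨i, j, hij, A, hiA, B, hjB, hAB, rfl⟩
  · rintro ⟨i, j, rfl, A, hiA, B, hjB, hAB, rfl⟩
    rw [h_add A B hAB, show i + j + 2 = (i + 1) + (j + 1) by ring, Nat.cast_add]
    exact add_le_add hiA hjB

theorem isGδ_compl_setOfPred_le_encard_largeComponents (δ : ℝ) (n : ℕ) :
    IsGδ {S : NonemptyCompacts X | (n : ℕ∞) ≤ (largeComponents δ (S : Set X)).encard}ᶜ := by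
  induction n using Nat.strong_induction_on with
  | h n ih =>
  match n with
  | 0 => simp
  | 1 =>
    simp only [Nat.cast_one, Set.one_le_encard_iff_nonempty]
    exact (isClosed_setOfPred_largeComponents_nonempty δ).isOpen_compl.isGδ
  | n + 2 =>
    simp only [add_two_le_encard_largeComponents_iff, Set.ofPred_exists, Set.compl_iUnion]
    refine .iInter fun i => .iInter fun j => ?_
    by_cases hij : i + j = n
    · have h_split := isGδ_compl_setOfPred_disjoint_sup_eq
        (ih (i + 1) (by omega)) (ih (j + 1) (by omega))
      simpa [hij] using h_split
    · simp [hij]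

theorem statement16_general [MeasurableSpace (NonemptyCompacts X)] [BorelSpace (NonemptyCompacts X)]
    (δ : ℝ) :
    Measurable fun S : NonemptyCompacts X => (largeComponents δ (S : Set X)).encard := by
  have h_le (n : ℕ) :
      MeasurableSet {S : NonemptyCompacts X | n ≤ (largeComponents δ (S : Set X)).encard} :=
    (isGδ_compl_setOfPred_le_encard_largeComponents δ n).measurableSet.of_compl
  refine ENat.measurable_iff.2 fun n => ?_
  convert (h_le n).diff (h_le (n + 1)) using 1
  ext S
  rw [Set.mem_sdiff, Set.mem_ofPred_eq, Set.mem_ofPred_eq, not_le, Nat.cast_add, Nat.cast_one,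
    ENat.lt_add_one_iff (ENat.natCast_ne_top n), and_comm, ← le_antisymm_iff]
  rfl

end Measurability

/-- Fix `d ≥ 1` and `δ > 0`.  Let `K` be the space of nonempty compact
subsets of the closed unit ball of `ℝ^d`, with the Hausdorff metric and its Borel
σ-algebra.  Then the map `N_δ : K → ℕ ∪ {∞}` sending a compact set `S` to the number of
connected components of `S` of diameter at least `δ` is Borel measurable (the countable
codomain `ℕ∞` carrying the discrete/powerset σ-algebra). -/
theorem statement16 (d : ℕ) (hd : 1 ≤ d) (δ : ℝ) (hδ : 0 < δ) :
    @Measurable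
      (NonemptyCompacts (Metric.closedBall (0 : EuclideanSpace ℝ (Fin d)) 1)) ℕ∞
      (borel (NonemptyCompacts (Metric.closedBall (0 : EuclideanSpace ℝ (Fin d)) 1))) ⊤
      (fun S =>
        Set.encard {C : Set (Metric.closedBall (0 : EuclideanSpace ℝ (Fin d)) 1) |
          (∃ x ∈ (S : Set (Metric.closedBall (0 : EuclideanSpace ℝ (Fin d)) 1)),
            C = connectedComponentIn (S : Set _) x) ∧ δ ≤ Metric.diam C}) := by
  borelize (NonemptyCompacts (Metric.closedBall (0 : EuclideanSpace ℝ (Fin d)) 1))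
  exact statement16_general δ
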